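/- (Explicit nontrivial idempotent, from the proof of Theorem 3.3) Set s_l := b_{2l−1} + b_{2l} for l = 1,…,r and S := {l ∈ {1,…,r} : t ∤ s_l}. Suppose S is nonempty and that t divides s_p + s_{p'} whenever p < p' are consecutive elements of S (i.e. no element of S lies strictly between p and p'). Let l₁ := min S; then s_{l₁} is a unit of R, and there exists an endomorphism family (φ_1,…,φ_n) with φ_m² = φ_m for all m and φ_{j_r} = [[1, 0],[−t·s_{l₁}^{−1}, 0]]. In particular this family is an idempotent endomorphism that is neither 0 nor the identity, so 𝕄(I,J) is decomposable. -/

import Mathlib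

open PowerSeries Matrix
open scoped Classical

noncomputable section

/-- `R` is the ring of formal power series `ℂ[[t]]`. -/
abbrev R : Type := PowerSeries ℂ

/-- The variable `t` of `ℂ[[t]]`. -/
noncomputable def t : R := PowerSeries.X

/-- `2 × 2` matrices over `R = ℂ[[t]]`. -/
abbrev M2 : Type := Matrix (Fin 2) (Fin 2) R

/-!
Write `e_0 < e_1 < ⋯ < e_{2r-1}` for `i_1 < j_1 < ⋯ < i_r < j_r`, so that
`x_{e_m} = [[u_m, b_{m+1}], [0, u_{m+1}]]` with `u = (t, 1, t, 1, …)`, while every other `x_v` is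
scalar. For a fixed `c`, the matrix `[[1 - cB, -B(1 - cB)/u], [-uc, cB]]` is idempotent, and
`[[u, β], [0, u']]` intertwines the one for `(u, B)` with the one for `(u', B + β)`. Hence, starting
from `(t, 0)`, the endomorphism family is found by replacing `B` with the partial sums of the `b_m`;
it closes up around the quiver because all the `b_m` sum to `0`. The only obstruction is
integrality, `t ∣ B(1 - cB)` after each complete pair. For `c = σ⁻¹`, `σ = s_{l₁}`, it holds:
modulo `t` the nonzero `s_l` alternate between `σ` and `-σ`, so `B` is congruent to `0` or to `σ`.
-/

section IdempotentMatrix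

variable {A : Type*} [CommRing A]

/-- The matrix `[[1 - cB, -B(1 - cB)/u], [-uc, cB]]`, an idempotent of rank one whenever `u` divides
`B(1 - cB)`. As `u` may be a zero divisor, the quotient is a chosen one, taken to be `0` when
`B = 0` and, as a junk value, when `u` does not divide. -/
def idempotentMatrix (c u B : A) : Matrix (Fin 2) (Fin 2) A :=
  !![1 - c * B, -(if h : B ≠ 0 ∧ u ∣ B * (1 - c * B) then h.2.choose else 0); -(u * c), c * B]

theorem idempotentMatrix_zero (c u : A) : idempotentMatrix c u 0 = !![1, 0; -(u * c), 0] := by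
  simp [idempotentMatrix]

theorem exists_idempotentMatrix_eq {c u B : A} (h : u ∣ B * (1 - c * B)) :
    ∃ q, u * q = B * (1 - c * B) ∧
      idempotentMatrix c u B = !![1 - c * B, -q; -(u * c), c * B] := by
  refine ⟨_, ?_, rfl⟩
  split_ifs with hB
  · exact hB.2.choose_spec.symm
  · have : B = 0 := by simpa [h] using hB
    simp [this]

theorem isIdempotentElem_idempotentMatrix {c u B : A} (h : u ∣ B * (1 - c * B)) :
    IsIdempotentElem (idempotentMatrix c u B) := by
  obtain ⟨q, hq, hM⟩ := exists_idempotentMatrix_eq h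
  rw [IsIdempotentElem, hM, Matrix.mul_fin_two]
  simp only [EmbeddingLike.apply_eq_iff_eq, Matrix.vecCons_inj, and_true]
  refine ⟨⟨?_, ?_⟩, ?_, ?_⟩
  · linear_combination c * hq
  · ring
  · ring
  · linear_combination c * hq

theorem mul_idempotentMatrix_eq {c u u' B β : A} (h : u ∣ B * (1 - c * B))
    (h' : u' ∣ (B + β) * (1 - c * (B + β))) :
    !![u, β; 0, u'] * idempotentMatrix c u B =
      idempotentMatrix c u' (B + β) * !![u, β; 0, u'] := by
  obtain ⟨q, hq, hM⟩ := exists_idempotentMatrix_eq h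
  obtain ⟨q', hq', hM'⟩ := exists_idempotentMatrix_eq h'
  rw [hM, hM', Matrix.mul_fin_two, Matrix.mul_fin_two]
  simp only [EmbeddingLike.apply_eq_iff_eq, Matrix.vecCons_inj, and_true]
  refine ⟨⟨?_, ?_⟩, ?_, ?_⟩
  · ring
  · linear_combination hq' - hq
  · ring
  · ring

end IdempotentMatrix

section Cyclic

variable {n : ℕ} {M : Type*} {ψ : ℕ → M}

theorem apply_val_natCast_of_periodic (hψ : ψ n = ψ 0) {v : ℕ} (hv : v ≤ n) :
    ψ (v : ZMod n).val = ψ v := by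
  rcases hv.eq_or_lt with rfl | hv
  · rw [ZMod.natCast_self, ZMod.val_zero, hψ]
  · rw [ZMod.val_natCast_of_lt hv]

theorem mul_apply_val_sub_one [NeZero n] [Mul M] {x : ZMod n → M} (hψ : ψ n = ψ 0)
    (hx : ∀ v < n, x (v + 1 : ℕ) * ψ v = ψ (v + 1) * x (v + 1 : ℕ)) (m : ZMod n) :
    x m * ψ (m - 1).val = ψ m.val * x m := by
  have hlt : (m - 1).val < n := ZMod.val_lt _
  have hm : (((m - 1).val + 1 : ℕ) : ZMod n) = m := by simp
  have h := hx _ hlt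
  rwa [← apply_val_natCast_of_periodic hψ hlt, hm] at h

end Cyclic

section Crossings

variable {e : ℕ → ℕ} {K v m : ℕ}

/-- The number of distinct values among `e 0, …, e (K - 1)` that are at most `v`: how many of the
marked vertices have been crossed on the way from the vertex `0` to the vertex `v`. -/
def crossings (e : ℕ → ℕ) (K v : ℕ) : ℕ := Nat.count (fun w => ∃ m < K, e m = w) (v + 1)

theorem crossings_succ_of_ne (h : ∀ m < K, v + 1 ≠ e m) :
    crossings e K (v + 1) = crossings e K v :=
  Nat.count_succ_eq_count_iff.mpr fun ⟨m, hm, hem⟩ => h m hm hem.symm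

theorem crossings_succ_of_eq (hm : m < K) (h : v + 1 = e m) :
    crossings e K (v + 1) = crossings e K v + 1 :=
  Nat.count_succ_eq_succ_count_iff.mpr ⟨m, hm, h.symm⟩

theorem crossings_eq (he : StrictMonoOn e (Set.Iio K)) (hm : m ≤ K)
    (h : ∀ l < K, e l ≤ v ↔ l < m) : crossings e K v = m := by
  have himage : (Finset.range (v + 1)).filter (fun w => ∃ l < K, e l = w) =
      (Finset.range m).image e := by
    ext w
    simp only [Finset.mem_filter, Finset.mem_image, Finset.mem_range, Nat.lt_succ_iff]
    constructor
    · rintro ⟨hw, l, hl, rfl⟩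
      exact ⟨l, (h l hl).mp hw, rfl⟩
    · rintro ⟨l, hl, rfl⟩
      exact ⟨(h l (hl.trans_le hm)).mpr hl, l, hl.trans_le hm, rfl⟩
  have hinj : Set.InjOn e (Finset.range m) :=
    he.injOn.mono fun l hl => (Finset.mem_range.mp hl).trans_le hm
  rw [crossings, Nat.count_eq_card_filter_range, himage, Finset.card_image_of_injOn hinj,
    Finset.card_range]

theorem crossings_eq_zero (he : StrictMonoOn e (Set.Iio K)) (h : ∀ l < K, v < e l) :
    crossings e K v = 0 :=
  crossings_eq he K.zero_le fun l hl => by simp [h l hl]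

theorem crossings_eq_of_forall_le (he : StrictMonoOn e (Set.Iio K)) (h : ∀ l < K, e l ≤ v) :
    crossings e K v = K :=
  crossings_eq he le_rfl fun l hl => by simp [h l hl, hl]

theorem crossings_eq_of_succ_eq (he : StrictMonoOn e (Set.Iio K)) (hm : m < K)
    (h : v + 1 = e m) : crossings e K v = m :=
  crossings_eq he hm.le fun l hl => by
    rw [← he.lt_iff_lt hl hm, ← h, Nat.lt_succ_iff]

theorem crossings_mono : Monotone (crossings e K) :=
  fun _ _ h => Nat.count_monotone _ (Nat.succ_le_succ h)

end Crossings

section CyclicIdempotent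

variable {A : Type*} [CommRing A] {K : ℕ} {e : ℕ → ℕ} {c : A} {u β : ℕ → A}

/-- The idempotent at a vertex reached after crossing the first `m` marked vertices, where crossing
the `l`-th one adds `β l` to the parameter `B` and moves the parameter `u` from `u l` to
`u (l + 1)`. -/
def pathIdempotent (c : A) (u β : ℕ → A) (m : ℕ) : Matrix (Fin 2) (Fin 2) A :=
  idempotentMatrix c (u m) (∑ l ∈ Finset.range m, β l)

theorem pathIdempotent_of_sum_eq_zero {m : ℕ} (h : ∑ l ∈ Finset.range m, β l = 0) :
    pathIdempotent c u β m = !![1, 0; -(u m * c), 0] := by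
  rw [pathIdempotent, h, idempotentMatrix_zero]

theorem mul_pathIdempotent_crossings (he : StrictMonoOn e (Set.Iio K))
    (hdvd : ∀ m ≤ K, u m ∣
      (∑ l ∈ Finset.range m, β l) * (1 - c * ∑ l ∈ Finset.range m, β l))
    {v : ℕ} {y : Matrix (Fin 2) (Fin 2) A}
    (hy : ∀ m < K, v + 1 = e m → y = !![u m, β m; 0, u (m + 1)])
    (hy_scalar : (∀ m < K, v + 1 ≠ e m) → ∃ a : A, y = a • 1) :
    y * pathIdempotent c u β (crossings e K v) =
      pathIdempotent c u β (crossings e K (v + 1)) * y := by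
  by_cases hcross : ∃ m < K, v + 1 = e m
  · obtain ⟨m, hm, hvm⟩ := hcross
    have hdvd_succ := hdvd (m + 1) hm
    rw [Finset.sum_range_succ] at hdvd_succ
    rw [crossings_succ_of_eq hm hvm, crossings_eq_of_succ_eq he hm hvm, hy m hm hvm,
      pathIdempotent, pathIdempotent, Finset.sum_range_succ]
    exact mul_idempotentMatrix_eq (hdvd m hm.le) hdvd_succ
  · push Not at hcross
    obtain ⟨a, rfl⟩ := hy_scalar hcross
    rw [crossings_succ_of_ne hcross, smul_one_mul, mul_smul_one]

theorem exists_isIdempotentElem_family {n : ℕ} [NeZero n]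
    (he : StrictMonoOn e (Set.Iio K)) (he_mem : ∀ m < K, e m ∈ Set.Icc 1 n)
    (hu : u K = u 0) (hβ : ∑ l ∈ Finset.range K, β l = 0)
    (hdvd : ∀ m ≤ K, u m ∣
      (∑ l ∈ Finset.range m, β l) * (1 - c * ∑ l ∈ Finset.range m, β l))
    {x : ZMod n → Matrix (Fin 2) (Fin 2) A}
    (hx : ∀ m < K, x (e m) = !![u m, β m; 0, u (m + 1)])
    (hx_scalar : ∀ v ∈ Finset.Icc 1 n, (∀ m < K, v ≠ e m) → ∃ a : A, x v = a • 1) :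
    ∃ φ : ZMod n → Matrix (Fin 2) (Fin 2) A,
      (∀ m, x m * φ (m - 1) = φ m * x m) ∧ (∀ m, IsIdempotentElem (φ m)) ∧
      ∀ v ≤ n, (∀ m < K, e m ≤ v) → φ v = !![1, 0; -(u 0 * c), 0] := by
  let ψ v := pathIdempotent c u β (crossings e K v)
  have hψ_last {v : ℕ} (hv : ∀ m < K, e m ≤ v) : ψ v = !![1, 0; -(u 0 * c), 0] := by
    rw [← hu, ← pathIdempotent_of_sum_eq_zero hβ]
    exact congrArg (pathIdempotent c u β) (crossings_eq_of_forall_le he hv)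
  have hψ_zero : ψ 0 = !![1, 0; -(u 0 * c), 0] := by
    rw [← pathIdempotent_of_sum_eq_zero (Finset.sum_range_zero β)]
    exact congrArg (pathIdempotent c u β) (crossings_eq_zero he fun m hm => (he_mem m hm).1)
  have he_le : ∀ m < K, e m ≤ n := fun m hm => (he_mem m hm).2
  have hψ_periodic : ψ n = ψ 0 := (hψ_last he_le).trans hψ_zero.symm
  have hψ_step : ∀ v < n, x (v + 1 : ℕ) * ψ v = ψ (v + 1) * x (v + 1 : ℕ) := fun v hv =>
    mul_pathIdempotent_crossings he hdvd (fun m hm hvm => hvm ▸ hx m hm)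
      (hx_scalar _ (Finset.mem_Icc.mpr ⟨by lia, hv⟩))
  have hcross_le : ∀ v ≤ n, crossings e K v ≤ K := fun v hv =>
    (crossings_mono hv).trans_eq (crossings_eq_of_forall_le he he_le)
  refine ⟨fun m => ψ m.val, mul_apply_val_sub_one hψ_periodic hψ_step, fun m => ?_,
    fun v hv hlast => ?_⟩
  · exact isIdempotentElem_idempotentMatrix (hdvd _ (hcross_le _ (ZMod.val_lt m).le))
  · exact (apply_val_natCast_of_periodic hψ_periodic hv).trans (hψ_last hlast)

end CyclicIdempotent

section Interleave

variable {α : Type*}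

/-- The sequence `f 0, g 0, f 1, g 1, …`. It merges the `i_l` and `j_l` into one increasing
sequence, and lists the alternating diagonal entries of their matrices. -/
def interleave (f g : ℕ → α) (m : ℕ) : α := if Even m then f (m / 2) else g (m / 2)

theorem interleave_zero (f g : ℕ → α) : interleave f g 0 = f 0 := by
  simp [interleave]

theorem interleave_two_mul (f g : ℕ → α) (l : ℕ) : interleave f g (2 * l) = f l := by
  simp [interleave]

theorem interleave_two_mul_add_one (f g : ℕ → α) (l : ℕ) :
    interleave f g (2 * l + 1) = g l := by
  simp [interleave, Nat.mul_add_div]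

theorem forall_lt_two_mul_iff {p : ℕ → Prop} {r : ℕ} :
    (∀ m < 2 * r, p m) ↔ ∀ l < r, p (2 * l) ∧ p (2 * l + 1) := by
  refine ⟨fun h l hl => ⟨h _ (by lia), h _ (by lia)⟩, fun h m hm => ?_⟩
  obtain ⟨l, rfl | rfl⟩ := m.even_or_odd'
  · exact (h l (by lia)).1
  · exact (h l (by lia)).2

theorem strictMonoOn_interleave [Preorder α] {f g : ℕ → α} {r : ℕ} (hfg : ∀ l < r, f l < g l)
    (hgf : ∀ l, l + 1 < r → g l < f (l + 1)) :
    StrictMonoOn (interleave f g) (Set.Iio (2 * r)) := by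
  refine strictMonoOn_of_lt_succ Set.ordConnected_Iio fun m _ _ hm => ?_
  rw [Nat.succ_eq_succ, Nat.succ_eq_add_one] at hm ⊢
  rw [Set.mem_Iio] at hm
  obtain ⟨l, rfl | rfl⟩ := m.even_or_odd'
  · rw [interleave_two_mul, interleave_two_mul_add_one]
    exact hfg l (by lia)
  · rw [← mul_add_one 2 l, interleave_two_mul_add_one, interleave_two_mul]
    exact hgf l (by lia)

theorem interleave_mem_Icc [Preorder α] {f g : ℕ → α} {r : ℕ} (hfg : ∀ l < r, f l < g l)
    (hgf : ∀ l, l + 1 < r → g l < f (l + 1)) {m : ℕ} (hm : m < 2 * r) :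
    interleave f g m ∈ Set.Icc (f 0) (g (r - 1)) := by
  have hmono := (strictMonoOn_interleave hfg hgf).monotoneOn
  rw [← interleave_zero f g, ← interleave_two_mul_add_one f g (r - 1)]
  exact ⟨hmono (Set.mem_Iio.mpr (by lia)) hm (by lia),
    hmono hm (Set.mem_Iio.mpr (by lia)) (by lia)⟩

end Interleave

section PartialSums

theorem sum_range_two_mul_add_one {G : Type*} [AddCommMonoid G] (b : ℕ → G) (L : ℕ) :
    ∑ m ∈ Finset.range (2 * L), b (m + 1) = ∑ l ∈ Finset.Icc 1 L, (b (2 * l - 1) + b (2 * l)) := by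
  induction L with
  | zero => simp
  | succ L ih =>
    rw [Finset.sum_Icc_succ_top (by lia), ← ih, mul_add_one, Finset.sum_range_succ,
      Finset.sum_range_succ, add_assoc]
    rfl

-- The induction carries the partial sum `T` along with the value `σ - 2T` that the next nonzero
-- term must have.
theorem sum_Icc_eq_zero_or_eq_of_alternating {G : Type*} [AddCommGroup G] {s : ℕ → G}
    {S : Finset ℕ} (hS : S.Nonempty) (hS_pos : ∀ l ∈ S, 0 < l) {r : ℕ}
    (hs : ∀ l ∈ Finset.Icc 1 r, l ∉ S → s l = 0)
    (hcons : ∀ p ∈ S, ∀ p' ∈ S, p < p' → (∀ q ∈ S, ¬ (p < q ∧ q < p')) → s p + s p' = 0)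
    {L : ℕ} (hL : L ≤ r) :
    ∑ l ∈ Finset.Icc 1 L, s l = 0 ∨ ∑ l ∈ Finset.Icc 1 L, s l = s (S.min' hS) := by
  set σ := s (S.min' hS) with hσ
  set T : ℕ → G := fun L => ∑ l ∈ Finset.Icc 1 L, s l with hT
  suffices h : (T L = 0 ∨ T L = σ) ∧ ∀ p ∈ S, L < p → (∀ q ∈ S, ¬ (L < q ∧ q < p)) →
      s p = σ - 2 • T L from h.1
  induction L with
  | zero =>
    refine ⟨Or.inl (by simp [hT]), fun p hp _ hnext => ?_⟩
    have hmin := S.min'_mem hS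
    have hp_min : S.min' hS = p := (S.min'_le p hp).antisymm <|
      not_lt.mp fun hlt => hnext _ hmin ⟨hS_pos _ hmin, hlt⟩
    simp [hT, hσ, hp_min]
  | succ L ih =>
    obtain ⟨hTL, hnext⟩ := ih (by lia)
    have hT_succ : T (L + 1) = T L + s (L + 1) := Finset.sum_Icc_succ_top (by lia) _
    by_cases hmem : L + 1 ∈ S
    · have hs_succ : s (L + 1) = σ - 2 • T L := hnext _ hmem L.lt_succ_self fun q _ => by lia
      have hT_flip : T (L + 1) = σ - T L := by rw [hT_succ, hs_succ]; abel
      refine ⟨?_, fun p hp hlt hgap => ?_⟩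
      · rcases hTL with h | h <;> simp [hT_flip, h]
      · rw [eq_neg_of_add_eq_zero_right (hcons _ hmem p hp hlt hgap), hs_succ, hT_flip]
        abel
    · have hT_same : T (L + 1) = T L := by
        rw [hT_succ, hs _ (Finset.mem_Icc.mpr ⟨by lia, hL⟩) hmem, add_zero]
      refine hT_same ▸ ⟨hTL, fun p hp hlt hgap => hnext p hp (by lia) fun q hq hqp => ?_⟩
      have hq_ne : q ≠ L + 1 := fun h => hmem (h ▸ hq)
      exact hgap q hq (by lia)

variable {A : Type*} [CommRing A] {ϖ : A}

theorem dvd_sum_Icc_mul_one_sub_of_alternating {s : ℕ → A} {r : ℕ} {S : Finset ℕ}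
    (hSdef : S = (Finset.Icc 1 r).filter (fun l => ¬ ϖ ∣ s l)) (hS : S.Nonempty)
    (hcons : ∀ p ∈ S, ∀ p' ∈ S, p < p' → (∀ q ∈ S, ¬ (p < q ∧ q < p')) → ϖ ∣ s p + s p')
    (hunit : IsUnit (s (S.min' hS))) {L : ℕ} (hL : L ≤ r) :
    ϖ ∣ (∑ l ∈ Finset.Icc 1 L, s l) *
      (1 - Ring.inverse (s (S.min' hS)) * ∑ l ∈ Finset.Icc 1 L, s l) := by
  set π := Ideal.Quotient.mk (Ideal.span {ϖ})
  have hπ : ∀ a, π a = 0 ↔ ϖ ∣ a := Ideal.Quotient.eq_zero_iff_dvd ϖ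
  have hmem : ∀ l, l ∈ S ↔ l ∈ Finset.Icc 1 r ∧ ¬ ϖ ∣ s l := fun l => by
    rw [hSdef, Finset.mem_filter]
  have hsum := sum_Icc_eq_zero_or_eq_of_alternating (s := fun l => π (s l)) hS
    (fun l hl => (Finset.mem_Icc.mp ((hmem l).mp hl).1).1)
    (fun l hl hlS => (hπ _).mpr (not_not.mp fun h => hlS ((hmem l).mpr ⟨hl, h⟩)))
    (fun p hp p' hp' hlt hgap => by
      rw [← map_add, hπ]
      exact hcons p hp p' hp' hlt hgap) hL
  have hinv : π (Ring.inverse (s (S.min' hS))) * π (s (S.min' hS)) = 1 := by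
    rw [← map_mul, Ring.inverse_mul_cancel _ hunit, map_one]
  rw [← hπ, map_mul, map_sub, map_mul, map_one, map_sum]
  rcases hsum with h | h <;> simp [h, hinv]

theorem interleave_dvd_sum_range_mul_one_sub {b : ℕ → A} {r : ℕ} {S : Finset ℕ}
    (hSdef : S = (Finset.Icc 1 r).filter (fun l => ¬ ϖ ∣ (b (2 * l - 1) + b (2 * l))))
    (hS : S.Nonempty)
    (hcons : ∀ p ∈ S, ∀ p' ∈ S, p < p' → (∀ q ∈ S, ¬ (p < q ∧ q < p')) →
      ϖ ∣ (b (2 * p - 1) + b (2 * p) + (b (2 * p' - 1) + b (2 * p'))))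
    (hunit : IsUnit (b (2 * S.min' hS - 1) + b (2 * S.min' hS))) {m : ℕ} (hm : m ≤ 2 * r) :
    interleave (fun _ => ϖ) (fun _ => 1) m ∣ (∑ l ∈ Finset.range m, b (l + 1)) *
      (1 - Ring.inverse (b (2 * S.min' hS - 1) + b (2 * S.min' hS)) *
        ∑ l ∈ Finset.range m, b (l + 1)) := by
  obtain ⟨L, rfl | rfl⟩ := m.even_or_odd'
  · rw [interleave_two_mul, sum_range_two_mul_add_one]
    exact dvd_sum_Icc_mul_one_sub_of_alternating hSdef hS hcons hunit (by lia)
  · rw [interleave_two_mul_add_one]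
    exact one_dvd _

end PartialSums

theorem isUnit_of_not_t_dvd {a : R} (h : ¬ t ∣ a) : IsUnit a := by
  rwa [t, ← Ideal.mem_span_singleton, ← maximalIdeal_eq_span_X,
    IsLocalRing.notMem_maximalIdeal] at h

theorem stmt5_general {A : Type*} [CommRing A] [Nontrivial A] (ϖ : A) (n r : ℕ) (i j : ℕ → ℕ)
    (hi1 : 1 ≤ i 0) (hjr : j (r - 1) ≤ n)
    (hij : ∀ l, l < r → i l < j l)
    (hji : ∀ l, l + 1 < r → j l < i (l + 1))
    (b : ℕ → A) (hb : ∑ m ∈ Finset.Icc 1 (2 * r), b m = 0)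
    (x : ZMod n → Matrix (Fin 2) (Fin 2) A)
    (hxI : ∀ l, l < r → x (i l) = !![ϖ, b (2 * l + 1); 0, 1])
    (hxJ : ∀ l, l < r → x (j l) = !![1, b (2 * l + 2); 0, ϖ])
    (hxO : ∀ m ∈ Finset.Icc 1 n, (∀ l, l < r → m ≠ i l ∧ m ≠ j l) → ∃ a : A, x m = a • 1)
    (S : Finset ℕ)
    (hSdef : S = (Finset.Icc 1 r).filter (fun l => ¬ ϖ ∣ (b (2 * l - 1) + b (2 * l))))
    (hS : S.Nonempty)
    (hunit : IsUnit (b (2 * S.min' hS - 1) + b (2 * S.min' hS)))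
    (hcons : ∀ p ∈ S, ∀ p' ∈ S, p < p' → (∀ q ∈ S, ¬ (p < q ∧ q < p')) →
      ϖ ∣ (b (2 * p - 1) + b (2 * p) + (b (2 * p' - 1) + b (2 * p')))) :
    ∃ φ : ZMod n → Matrix (Fin 2) (Fin 2) A,
      (∀ m : ZMod n, x m * φ (m - 1) = φ m * x m) ∧
      (∀ m : ZMod n, φ m * φ m = φ m) ∧
      φ (j (r - 1)) =
        !![1, 0; -(ϖ * Ring.inverse (b (2 * S.min' hS - 1) + b (2 * S.min' hS))), 0] ∧
      (∃ m : ZMod n, φ m ≠ 0) ∧ (∃ m : ZMod n, φ m ≠ 1) := by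
  have hr : 0 < r := by
    have hmin := (Finset.ext_iff.mp hSdef _).mp (S.min'_mem hS)
    rw [Finset.mem_filter, Finset.mem_Icc] at hmin
    lia
  have he_mem : ∀ m < 2 * r, interleave i j m ∈ Set.Icc 1 n := fun m hm =>
    Set.Icc_subset_Icc hi1 hjr (interleave_mem_Icc hij hji hm)
  have : NeZero n := .of_pos (Set.nonempty_Icc.mp ⟨_, he_mem 0 (by lia)⟩)
  have hb' : ∑ m ∈ Finset.range (2 * r), b (m + 1) = 0 := by
    rw [← hb, Finset.range_eq_Ico, Finset.sum_Ico_add', zero_add,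
      Finset.Ico_add_one_right_eq_Icc]
  obtain ⟨φ, hcomm, hidem, hlast⟩ := exists_isIdempotentElem_family
    (c := Ring.inverse (b (2 * S.min' hS - 1) + b (2 * S.min' hS)))
    (u := interleave (fun _ => ϖ) fun _ => 1) (β := fun m => b (m + 1)) (x := x)
    (strictMonoOn_interleave hij hji) he_mem
    (by rw [interleave_two_mul, interleave_zero]) hb'
    (fun _ hm => interleave_dvd_sum_range_mul_one_sub hSdef hS hcons hunit hm)
    (forall_lt_two_mul_iff.mpr fun l hl => by
      rw [add_assoc, ← mul_add_one 2 l]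
      simp only [interleave_two_mul, interleave_two_mul_add_one]
      exact ⟨hxI l hl, hxJ l hl⟩)
    (fun v hv hne => hxO v hv fun l hl => by
      simpa only [interleave_two_mul, interleave_two_mul_add_one] using
        forall_lt_two_mul_iff.mp hne l hl)
  have hφ := hlast (j (r - 1)) hjr fun m hm => (interleave_mem_Icc hij hji hm).2
  rw [interleave_zero] at hφ
  refine ⟨φ, hcomm, hidem, hφ, ⟨j (r - 1), fun h => ?_⟩, ⟨j (r - 1), fun h => ?_⟩⟩
  · simpa using congr_fun₂ (hφ.symm.trans h) 0 0
  · simpa using congr_fun₂ (hφ.symm.trans h) 1 1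

/-- (Explicit nontrivial idempotent, from the proof of Theorem 3.3.)
With `s_l := b_{2l−1} + b_{2l}` (`1`-indexed) and `S := {l ∈ {1,…,r} : t ∤ s_l}`,
assume `S ≠ ∅` and that `t ∣ s_p + s_{p'}` for all consecutive `p < p'` in `S`.
Then `s_{l₁}` is a unit for `l₁ := min S`, and there is an idempotent endomorphism
family `(φ_1,…,φ_n)` with `φ_{j_r} = [[1, 0],[−t·s_{l₁}⁻¹, 0]]`; in particular `φ`
is neither `0` nor the identity, so `𝕄(I,J)` is decomposable.
Here `i, j : ℕ → ℕ` are `0`-indexed, so `i l, j l` for `l < r` are the paper's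
`i_{l+1}, j_{l+1}`, and `b (2*l+1), b (2*l+2)` are the paper's `b_{2(l+1)-1}, b_{2(l+1)}`. -/
theorem stmt5
    (n k r : ℕ) (hn : 6 ≤ n) (hr2 : 2 ≤ r) (hrk : r ≤ k) (hkrn : k + r ≤ n)
    (i j : ℕ → ℕ)
    (hi1 : 1 ≤ i 0) (hjr : j (r - 1) ≤ n)
    (hij : ∀ l, l < r → i l < j l)
    (hji : ∀ l, l + 1 < r → j l < i (l + 1))
    (P : Finset ℕ) (hP : P ⊆ Finset.Icc 1 n)
    (hPcard : P.card = k - r)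
    (hPdisj : ∀ l, l < r → i l ∉ P ∧ j l ∉ P)
    (b : ℕ → R) (hb : ∑ m ∈ Finset.Icc 1 (2 * r), b m = 0)
    (x : ZMod n → M2)
    (hxI : ∀ l, l < r → x ((i l : ZMod n)) = !![t, b (2 * l + 1); 0, 1])
    (hxJ : ∀ l, l < r → x ((j l : ZMod n)) = !![1, b (2 * l + 2); 0, t])
    (hxP : ∀ m ∈ P, x ((m : ZMod n)) = 1)
    (hxO : ∀ m ∈ Finset.Icc 1 n, m ∉ P → (∀ l, l < r → m ≠ i l ∧ m ≠ j l) →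
      x ((m : ZMod n)) = t • (1 : M2))
    (S : Finset ℕ)
    (hSdef : S = (Finset.Icc 1 r).filter (fun l => ¬ t ∣ (b (2 * l - 1) + b (2 * l))))
    (hS : S.Nonempty)
    (hcons : ∀ p ∈ S, ∀ p' ∈ S, p < p' → (∀ q ∈ S, ¬ (p < q ∧ q < p')) →
      t ∣ (b (2 * p - 1) + b (2 * p) + (b (2 * p' - 1) + b (2 * p')))) :
    IsUnit (b (2 * S.min' hS - 1) + b (2 * S.min' hS)) ∧
    ∃ φ : ZMod n → M2,
      (∀ m : ZMod n, x m * φ (m - 1) = φ m * x m) ∧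
      (∀ m : ZMod n, φ m * φ m = φ m) ∧
      φ ((j (r - 1) : ZMod n)) =
        !![1, 0; -(t * Ring.inverse (b (2 * S.min' hS - 1) + b (2 * S.min' hS))), 0] ∧
      (∃ m : ZMod n, φ m ≠ 0) ∧ (∃ m : ZMod n, φ m ≠ 1) := by
  have hunit : IsUnit (b (2 * S.min' hS - 1) + b (2 * S.min' hS)) :=
    isUnit_of_not_t_dvd (Finset.mem_filter.mp ((Finset.ext_iff.mp hSdef _).mp (S.min'_mem hS))).2
  exact ⟨hunit, stmt5_general t n r i j hi1 hjr hij hji b hb x hxI hxJ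
    (fun m hm hne => if hmP : m ∈ P then ⟨1, by rw [hxP m hmP, one_smul]⟩
      else ⟨t, hxO m hm hmP hne⟩) S hSdef hS hunit hcons⟩

end
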